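/- arXiv:1504.04802 — 4 statements merged into one kernel-verified Lean document; each statement's English description precedes it below -/
import Mathlib

section
/- Linking principle: if F₁ and F₂ are formulas of gradual classical logic in unit chain expansion, then the formula F₁ ⋗ F₂ reduces to some formula in unit chain expansion. -/
/-!
The reduction of `F₁ ⋗ F₂` is built by induction on `F₁`, always keeping `F₂` an arbitrary formula
in unit chain expansion.

If `F₁` is a single element `s` of 𝒮, the rules (⋗4) and (⋗5) push `s` to the leaves of `F₂`, where
it lengthens each unit chain by one (`Expandable.base_obat`). If `F₁` is a unit chain `s ⋗ C`, rule (⋗1) gives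
`(s ⋗ F₂) ∧ ((s ⋗ C) ∨ (s ⋗ (C ⋗ F₂)))`; here `C` is a shorter chain (or an element of 𝒮), so
`C ⋗ F₂` reduces to a unit chain expansion by induction, and what remains has a single element of
𝒮 on the left of `⋗` (`Expandable.chain_obat`). If `F₁` is a conjunction or disjunction, (⋗2) and (⋗3)
distribute it.
-/

namespace GradualLogic

/-- Elements of 𝒮 = 𝒜 ∪ {⊤, ⊥}. -/
inductive GS (A : Type) : Type
  | lit : A → GS A
  | top : GS A
  | bot : GS A

/-- Complement on 𝒮, given the involutive complement `c` on literals. -/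
def GS.compl {A : Type} (c : A → A) : GS A → GS A
  | .lit a => .lit (c a)
  | .top => .bot
  | .bot => .top

/-- Formulas of gradual classical logic: F ::= s | F ∧ F | F ∨ F | ¬F | F ⋗ F. -/
inductive GF (A : Type) : Type
  | base : GS A → GF A
  | conj : GF A → GF A → GF A
  | disj : GF A → GF A → GF A
  | neg  : GF A → GF A
  | obat : GF A → GF A → GF A

/-- One-step reduction (closure of the ¬- and ⋗-rules under subformula contexts). -/
inductive Step {A : Type} (c : A → A) : GF A → GF A → Prop
  | neg1 (x : GS A) :
      Step c (GF.neg (GF.base x)) (GF.base (GS.compl c x))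
  | neg2 (F₁ F₂ : GF A) :
      Step c (GF.neg (GF.conj F₁ F₂)) (GF.disj (GF.neg F₁) (GF.neg F₂))
  | neg3 (F₁ F₂ : GF A) :
      Step c (GF.neg (GF.disj F₁ F₂)) (GF.conj (GF.neg F₁) (GF.neg F₂))
  | neg4 (x : GS A) (F₂ : GF A) :
      Step c (GF.neg (GF.obat (GF.base x) F₂))
        (GF.disj (GF.base (GS.compl c x)) (GF.obat (GF.base x) (GF.neg F₂)))
  | ob1 (F₁ F₂ F₃ : GF A) :
      Step c (GF.obat (GF.obat F₁ F₂) F₃)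
        (GF.conj (GF.obat F₁ F₃)
          (GF.disj (GF.obat F₁ F₂) (GF.obat F₁ (GF.obat F₂ F₃))))
  | ob2 (F₁ F₂ F₃ : GF A) :
      Step c (GF.obat (GF.conj F₁ F₂) F₃) (GF.conj (GF.obat F₁ F₃) (GF.obat F₂ F₃))
  | ob3 (F₁ F₂ F₃ : GF A) :
      Step c (GF.obat (GF.disj F₁ F₂) F₃) (GF.disj (GF.obat F₁ F₃) (GF.obat F₂ F₃))
  | ob4 (F₁ F₂ F₃ : GF A) :
      Step c (GF.obat F₁ (GF.conj F₂ F₃)) (GF.conj (GF.obat F₁ F₂) (GF.obat F₁ F₃))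
  | ob5 (F₁ F₂ F₃ : GF A) :
      Step c (GF.obat F₁ (GF.disj F₂ F₃)) (GF.disj (GF.obat F₁ F₂) (GF.obat F₁ F₃))
  | conj_left {F F' : GF A} (G : GF A) :
      Step c F F' → Step c (GF.conj F G) (GF.conj F' G)
  | conj_right (F : GF A) {G G' : GF A} :
      Step c G G' → Step c (GF.conj F G) (GF.conj F G')
  | disj_left {F F' : GF A} (G : GF A) :
      Step c F F' → Step c (GF.disj F G) (GF.disj F' G)
  | disj_right (F : GF A) {G G' : GF A} :
      Step c G G' → Step c (GF.disj F G) (GF.disj F G')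
  | neg_congr {F F' : GF A} :
      Step c F F' → Step c (GF.neg F) (GF.neg F')
  | obat_left {F F' : GF A} (G : GF A) :
      Step c F F' → Step c (GF.obat F G) (GF.obat F' G)
  | obat_right (F : GF A) {G G' : GF A} :
      Step c G G' → Step c (GF.obat F G) (GF.obat F G')

/-- `Reduces c F G`: F ↦* G in finitely many (possibly zero) steps. -/
def Reduces {A : Type} (c : A → A) : GF A → GF A → Prop :=
  Relation.ReflTransGen (Step c)

/-- Unit chains s₀ ⋗ s₁ ⋗ ⋯ ⋗ s_{k+1} (right-associated, all components in 𝒮). -/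
inductive IsUnitChain {A : Type} : GF A → Prop
  | base (x y : GS A) : IsUnitChain (GF.obat (GF.base x) (GF.base y))
  | cons (x : GS A) {F : GF A} : IsUnitChain F → IsUnitChain (GF.obat (GF.base x) F)

/-- Unit chain expansion: built from elements of 𝒮 and unit chains using only ∧ and ∨. -/
inductive UCE {A : Type} : GF A → Prop
  | base (x : GS A) : UCE (GF.base x)
  | chain {F : GF A} : IsUnitChain F → UCE F
  | conj {F G : GF A} : UCE F → UCE G → UCE (GF.conj F G)
  | disj {F G : GF A} : UCE F → UCE G → UCE (GF.disj F G)

/-- Formulas in which ¬ does not occur. -/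
inductive NegFree {A : Type} : GF A → Prop
  | base (x : GS A) : NegFree (GF.base x)
  | conj {F G : GF A} : NegFree F → NegFree G → NegFree (GF.conj F G)
  | disj {F G : GF A} : NegFree F → NegFree G → NegFree (GF.disj F G)
  | obat {F G : GF A} : NegFree F → NegFree G → NegFree (GF.obat F G)

/-- A valuation frame (I, J): local interpretation I with the required conditions;
the global interpretation J is determined by I and is built into `Frame.val` below. -/
structure Frame (A : Type) (c : A → A) where
  I : List (GS A) → GS A → ℕ
  I01 : ∀ ψ x, I ψ x = 0 ∨ I ψ x = 1
  Itop : ∀ ψ, I ψ GS.top = 1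
  Ibot : ∀ ψ, I ψ GS.bot = 0
  Icompl : ∀ ψ x, I ψ (GS.compl c x) = 1 - I ψ x
  Isync : ∀ ψ ψ' x, ψ.length = ψ'.length → I ψ x = I ψ' x

/-- The valuation of a formula in unit chain expansion, relative to the sequence ψ of
𝒮-elements already traversed: a unit chain s₀ ⋗ ⋯ ⋗ s_k receives the global value
J(s₀.⋯.s_k) (the min of the local values along its prefixes), ∧ is min, ∨ is max.
(The value on formulas not in unit chain expansion is junk and never used.) -/
def Frame.valAux {A : Type} {c : A → A} (M : Frame A c) : List (GS A) → GF A → ℕ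
  | ψ, GF.base x => M.I ψ x
  | ψ, GF.conj F G => min (M.valAux ψ F) (M.valAux ψ G)
  | ψ, GF.disj F G => max (M.valAux ψ F) (M.valAux ψ G)
  | _, GF.neg _ => 0
  | ψ, GF.obat (GF.base x) G => min (M.I ψ x) (M.valAux (ψ ++ [x]) G)
  | _, GF.obat _ _ => 0

/-- `[M ⊨ F]` for F in unit chain expansion. -/
def Frame.val {A : Type} {c : A → A} (M : Frame A c) (F : GF A) : ℕ :=
  M.valAux [] F

/-- Distribute `s ⋗ -` over the ∧/∨-structure of a formula (the ⋗-reductions 4 and 5). -/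
def distOb {A : Type} (x : GS A) : GF A → GF A
  | GF.conj F G => GF.conj (distOb x F) (distOb x G)
  | GF.disj F G => GF.disj (distOb x F) (distOb x G)
  | F => GF.obat (GF.base x) F

/-- recursiveReduce on formulas in unit chain expansion: swap ∧/∨, complement the
non-chain 𝒮-elements, replace a chain with head s and tail T by
sᶜ ∨ (s ⋗ recursiveReduce T), reduced into unit chain expansion via ⋗-reductions. -/
def recursiveReduce {A : Type} (c : A → A) : GF A → GF A
  | GF.base x => GF.base (GS.compl c x)
  | GF.conj F G => GF.disj (recursiveReduce c F) (recursiveReduce c G)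
  | GF.disj F G => GF.conj (recursiveReduce c F) (recursiveReduce c G)
  | GF.obat (GF.base x) F =>
      GF.disj (GF.base (GS.compl c x)) (distOb x (recursiveReduce c F))
  | GF.obat F G => GF.obat F G
  | GF.neg F => GF.neg F

/-- Validity: every unit chain expansion that F reduces to receives value 1 in
every valuation frame. -/
def Valid {A : Type} (c : A → A) (F : GF A) : Prop :=
  ∀ (M : Frame A c) (G : GF A), UCE G → Reduces c F G → M.val G = 1

/-- The fifteen shape pairs of the bisimulation theorem. -/
inductive ShapePair {A : Type} (c : A → A) : GF A → GF A → Prop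
  | s1 (Fa Fb Fc : GF A) :
      ShapePair c (GF.obat (GF.conj Fa Fb) Fc) (GF.conj (GF.obat Fa Fc) (GF.obat Fb Fc))
  | s2 (Fa Fb Fc : GF A) :
      ShapePair c (GF.obat (GF.disj Fa Fb) Fc) (GF.disj (GF.obat Fa Fc) (GF.obat Fb Fc))
  | s3 (Fa Fb Fc : GF A) :
      ShapePair c (GF.obat Fa (GF.conj Fb Fc)) (GF.conj (GF.obat Fa Fb) (GF.obat Fa Fc))
  | s4 (Fa Fb Fc : GF A) :
      ShapePair c (GF.obat Fa (GF.disj Fb Fc)) (GF.disj (GF.obat Fa Fb) (GF.obat Fa Fc))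
  | s5 (Fa Fb Fc : GF A) :
      ShapePair c (GF.obat (GF.obat Fa Fb) Fc)
        (GF.conj (GF.obat Fa Fc) (GF.disj (GF.obat Fa Fb) (GF.obat Fa (GF.obat Fb Fc))))
  | s6 (x : GS A) :
      ShapePair c (GF.neg (GF.base x)) (GF.base (GS.compl c x))
  | s7 (F₁ F₂ : GF A) :
      ShapePair c (GF.neg (GF.conj F₁ F₂)) (GF.disj (GF.neg F₁) (GF.neg F₂))
  | s8 (F₁ F₂ : GF A) :
      ShapePair c (GF.neg (GF.disj F₁ F₂)) (GF.conj (GF.neg F₁) (GF.neg F₂))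
  | s9 (x : GS A) (F₂ : GF A) :
      ShapePair c (GF.neg (GF.obat (GF.base x) F₂))
        (GF.disj (GF.base (GS.compl c x)) (GF.obat (GF.base x) (GF.neg F₂)))
  | s10 (Fa : GF A) : ShapePair c (GF.disj Fa Fa) Fa
  | s11 (Fa : GF A) : ShapePair c (GF.conj Fa Fa) Fa
  | s12 (Fa Fb : GF A) : ShapePair c (GF.conj Fa Fb) (GF.conj Fb Fa)
  | s13 (Fa Fb : GF A) : ShapePair c (GF.disj Fa Fb) (GF.disj Fb Fa)
  | s14 (Fa Fb Fc : GF A) :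
      ShapePair c (GF.conj Fa (GF.conj Fb Fc)) (GF.conj (GF.conj Fa Fb) Fc)
  | s15 (Fa Fb Fc : GF A) :
      ShapePair c (GF.disj Fa (GF.disj Fb Fc)) (GF.disj (GF.disj Fa Fb) Fc)

/-- `ReplaceAt R F F'`: F' is obtained from F by replacing one occurrence of a
subformula related by R (in either direction). -/
inductive ReplaceAt {A : Type} (R : GF A → GF A → Prop) : GF A → GF A → Prop
  | here {F F' : GF A} : R F F' → ReplaceAt R F F'
  | here_rev {F F' : GF A} : R F' F → ReplaceAt R F F'
  | conj_left {F F' : GF A} (G : GF A) :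
      ReplaceAt R F F' → ReplaceAt R (GF.conj F G) (GF.conj F' G)
  | conj_right (F : GF A) {G G' : GF A} :
      ReplaceAt R G G' → ReplaceAt R (GF.conj F G) (GF.conj F G')
  | disj_left {F F' : GF A} (G : GF A) :
      ReplaceAt R F F' → ReplaceAt R (GF.disj F G) (GF.disj F' G)
  | disj_right (F : GF A) {G G' : GF A} :
      ReplaceAt R G G' → ReplaceAt R (GF.disj F G) (GF.disj F G')
  | neg_congr {F F' : GF A} :
      ReplaceAt R F F' → ReplaceAt R (GF.neg F) (GF.neg F')
  | obat_left {F F' : GF A} (G : GF A) :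
      ReplaceAt R F F' → ReplaceAt R (GF.obat F G) (GF.obat F' G)
  | obat_right (F : GF A) {G G' : GF A} :
      ReplaceAt R G G' → ReplaceAt R (GF.obat F G) (GF.obat F G')

/-- `F` reduces to some formula in unit chain expansion. -/
def Expandable {A : Type} (c : A → A) (F : GF A) : Prop :=
  ∃ G : GF A, UCE G ∧ Reduces c F G

namespace Expandable

variable {A : Type} {c : A → A} {F G H : GF A}

theorem of_uce (h : UCE F) : Expandable c F :=
  ⟨F, h, Relation.ReflTransGen.refl⟩

theorem of_reduces (h : Reduces c F G) (hG : Expandable c G) : Expandable c F := by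
  obtain ⟨K, hK, hr⟩ := hG
  exact ⟨K, hK, h.trans hr⟩

theorem of_step (h : Step c F G) (hG : Expandable c G) : Expandable c F :=
  of_reduces (Relation.ReflTransGen.single h) hG

theorem conj (hF : Expandable c F) (hG : Expandable c G) : Expandable c (GF.conj F G) := by
  obtain ⟨F', hF', rF⟩ := hF
  obtain ⟨G', hG', rG⟩ := hG
  exact ⟨GF.conj F' G', hF'.conj hG',
    (rF.lift (GF.conj · G) fun _ _ h => Step.conj_left G h).trans
      (rG.lift (GF.conj F') fun _ _ h => Step.conj_right F' h)⟩

theorem disj (hF : Expandable c F) (hG : Expandable c G) : Expandable c (GF.disj F G) := by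
  obtain ⟨F', hF', rF⟩ := hF
  obtain ⟨G', hG', rG⟩ := hG
  exact ⟨GF.disj F' G', hF'.disj hG',
    (rF.lift (GF.disj · G) fun _ _ h => Step.disj_left G h).trans
      (rG.lift (GF.disj F') fun _ _ h => Step.disj_right F' h)⟩

/-- Prefixing an element of 𝒮: (⋗4) and (⋗5) carry `x` to the leaves, where it extends chains. -/
theorem base_obat_of_uce (x : GS A) (hF : UCE F) : Expandable c (GF.obat (GF.base x) F) := by
  induction hF with
  | base y => exact of_uce (.chain (.base x y))
  | chain h => exact of_uce (.chain (.cons x h))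
  | conj _ _ ih₁ ih₂ => exact of_step (Step.ob4 _ _ _) (ih₁.conj ih₂)
  | disj _ _ ih₁ ih₂ => exact of_step (Step.ob5 _ _ _) (ih₁.disj ih₂)

theorem base_obat (x : GS A) (hF : Expandable c F) : Expandable c (GF.obat (GF.base x) F) := by
  obtain ⟨F', hF', rF⟩ := hF
  exact of_reduces (rF.lift (GF.obat (GF.base x)) fun _ _ h => Step.obat_right _ h)
    (base_obat_of_uce x hF')

/-- Linking on the left with a unit chain: (⋗1) splits off the head of the chain, and the
remaining tail is linked to `F` by induction. -/
theorem chain_obat (hH : IsUnitChain H) (hF : UCE F) : Expandable c (GF.obat H F) := by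
  induction hH with
  | base x y =>
    exact of_step (Step.ob1 _ _ _) ((base_obat_of_uce x hF).conj
      ((of_uce (.chain (.base x y))).disj (base_obat x (base_obat_of_uce y hF))))
  | cons x h ih =>
    exact of_step (Step.ob1 _ _ _) ((base_obat_of_uce x hF).conj
      ((of_uce (.chain (.cons x h))).disj (base_obat x ih)))

end Expandable

/-- Linking principle: if F₁ and F₂ are formulas in unit chain
expansion, then F₁ ⋗ F₂ reduces to some formula in unit chain expansion. -/
theorem linking_principle (A : Type) [Countable A] [Infinite A]
    (c : A → A) (hc : Function.Involutive c)
    (F₁ F₂ : GF A) (h₁ : UCE F₁) (h₂ : UCE F₂) :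
    ∃ G : GF A, UCE G ∧ Reduces c (GF.obat F₁ F₂) G := by
  change Expandable c (GF.obat F₁ F₂)
  induction h₁ with
  | base x => exact .base_obat_of_uce x h₂
  | chain h => exact .chain_obat h h₂
  | conj _ _ ih₁ ih₂ => exact .of_step (Step.ob2 _ _ _) (ih₁.conj ih₂)
  | disj _ _ ih₁ ih₂ => exact .of_step (Step.ob3 _ _ _) (ih₁.disj ih₂)

end GradualLogic
end

section
/- Reduction without negation: every formula of gradual classical logic in which the connective ¬ does not occur reduces to some formula in unit chain expansion. -/
/-!
The theorem follows by structural induction once `F ⋗ G` is shown to reduce to unit chain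
expansion whenever `F` and `G` are already expanded (`exists_uce_obat`). If `F` is a conjunction or
a disjunction, (⋗2) and (⋗3) distribute over it. If `F` is a single element `s`, (⋗4) and (⋗5)
distribute `s ⋗ -` over `G` until only unit chains remain (`exists_uce_base_obat`). If `F` is a unit
chain `s ⋗ T`, (⋗1) turns `F ⋗ G` into `(s ⋗ G) ∧ ((s ⋗ T) ∨ (s ⋗ (T ⋗ G)))`; the tail `T` is
shorter, so `T ⋗ G` reduces to some expanded `H` by induction on the chain, and both `s ⋗ G` and
`s ⋗ H` fall under the previous case.
-/

namespace GradualLogic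

theorem Reduces.conj {A : Type} {c : A → A} {F F' G G' : GF A}
    (hF : Reduces c F F') (hG : Reduces c G G') :
    Reduces c (GF.conj F G) (GF.conj F' G') :=
  Relation.ReflTransGen.trans
    (Relation.ReflTransGen.lift (fun X => GF.conj X G) (fun _ _ h => Step.conj_left G h) _ _ hF)
    (Relation.ReflTransGen.lift (fun X => GF.conj F' X) (fun _ _ h => Step.conj_right F' h) _ _ hG)

theorem Reduces.disj {A : Type} {c : A → A} {F F' G G' : GF A}
    (hF : Reduces c F F') (hG : Reduces c G G') :
    Reduces c (GF.disj F G) (GF.disj F' G') :=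
  Relation.ReflTransGen.trans
    (Relation.ReflTransGen.lift (fun X => GF.disj X G) (fun _ _ h => Step.disj_left G h) _ _ hF)
    (Relation.ReflTransGen.lift (fun X => GF.disj F' X) (fun _ _ h => Step.disj_right F' h) _ _ hG)

theorem Reduces.obat {A : Type} {c : A → A} {F F' G G' : GF A}
    (hF : Reduces c F F') (hG : Reduces c G G') :
    Reduces c (GF.obat F G) (GF.obat F' G') :=
  Relation.ReflTransGen.trans
    (Relation.ReflTransGen.lift (fun X => GF.obat X G) (fun _ _ h => Step.obat_left G h) _ _ hF)
    (Relation.ReflTransGen.lift (fun X => GF.obat F' X) (fun _ _ h => Step.obat_right F' h) _ _ hG)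

/-- Prefixing an expanded formula with a single element: `x ⋗ -` distributes over the ∧/∨-structure
and extends each unit chain at its head. -/
theorem exists_uce_base_obat {A : Type} (c : A → A) (x : GS A) {G : GF A} (hG : UCE G) :
    ∃ H : GF A, UCE H ∧ Reduces c (GF.obat (GF.base x) G) H := by
  induction hG with
  | base y => exact ⟨_, .chain (.base x y), .refl⟩
  | chain h => exact ⟨_, .chain (.cons x h), .refl⟩
  | conj _ _ ih₁ ih₂ =>
    obtain ⟨H₁, u₁, r₁⟩ := ih₁
    obtain ⟨H₂, u₂, r₂⟩ := ih₂
    exact ⟨_, .conj u₁ u₂, .head (Step.ob4 _ _ _) (Reduces.conj r₁ r₂)⟩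
  | disj _ _ ih₁ ih₂ =>
    obtain ⟨H₁, u₁, r₁⟩ := ih₁
    obtain ⟨H₂, u₂, r₂⟩ := ih₂
    exact ⟨_, .disj u₁ u₂, .head (Step.ob5 _ _ _) (Reduces.disj r₁ r₂)⟩

/-- The effect of (⋗1) on a unit chain `x ⋗ T` to the left of `⋗`: it suffices to expand `T ⋗ G`. -/
theorem exists_uce_cons_obat {A : Type} (c : A → A) (x : GS A) {T G : GF A}
    (hT : IsUnitChain (GF.obat (GF.base x) T)) (hG : UCE G)
    (ih : ∃ H : GF A, UCE H ∧ Reduces c (GF.obat T G) H) :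
    ∃ H : GF A, UCE H ∧ Reduces c (GF.obat (GF.obat (GF.base x) T) G) H := by
  obtain ⟨H, u, r⟩ := ih
  obtain ⟨H₁, u₁, r₁⟩ := exists_uce_base_obat c x hG
  obtain ⟨H₂, u₂, r₂⟩ := exists_uce_base_obat c x u
  exact ⟨_, .conj u₁ (.disj (.chain hT) u₂), .head (Step.ob1 _ _ _)
    (Reduces.conj r₁ (Reduces.disj .refl ((Reduces.obat .refl r).trans r₂)))⟩

theorem exists_uce_chain_obat {A : Type} (c : A → A) {F G : GF A}
    (hF : IsUnitChain F) (hG : UCE G) :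
    ∃ H : GF A, UCE H ∧ Reduces c (GF.obat F G) H := by
  induction hF with
  | base x y =>
    exact exists_uce_cons_obat c x (.base x y) hG (exists_uce_base_obat c y hG)
  | cons x h ih => exact exists_uce_cons_obat c x (.cons x h) hG ih

theorem exists_uce_obat {A : Type} (c : A → A) {F G : GF A} (hF : UCE F) (hG : UCE G) :
    ∃ H : GF A, UCE H ∧ Reduces c (GF.obat F G) H := by
  induction hF with
  | base x => exact exists_uce_base_obat c x hG
  | chain h => exact exists_uce_chain_obat c h hG
  | conj _ _ ih₁ ih₂ =>
    obtain ⟨H₁, u₁, r₁⟩ := ih₁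
    obtain ⟨H₂, u₂, r₂⟩ := ih₂
    exact ⟨_, .conj u₁ u₂, .head (Step.ob2 _ _ _) (Reduces.conj r₁ r₂)⟩
  | disj _ _ ih₁ ih₂ =>
    obtain ⟨H₁, u₁, r₁⟩ := ih₁
    obtain ⟨H₂, u₂, r₂⟩ := ih₂
    exact ⟨_, .disj u₁ u₂, .head (Step.ob3 _ _ _) (Reduces.disj r₁ r₂)⟩

/-- Reduction without negation: every formula in which ¬ does not
occur reduces to some formula in unit chain expansion. -/
theorem reduction_without_negation (A : Type) [Countable A] [Infinite A]
    (c : A → A) (hc : Function.Involutive c)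
    (F : GF A) (hF : NegFree F) :
    ∃ G : GF A, UCE G ∧ Reduces c F G := by
  induction hF with
  | base x => exact ⟨_, .base x, .refl⟩
  | conj _ _ ih₁ ih₂ =>
    obtain ⟨H₁, u₁, r₁⟩ := ih₁
    obtain ⟨H₂, u₂, r₂⟩ := ih₂
    exact ⟨_, .conj u₁ u₂, Reduces.conj r₁ r₂⟩
  | disj _ _ ih₁ ih₂ =>
    obtain ⟨H₁, u₁, r₁⟩ := ih₁
    obtain ⟨H₂, u₂, r₂⟩ := ih₂
    exact ⟨_, .disj u₁ u₂, Reduces.disj r₁ r₂⟩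
  | obat _ _ ih₁ ih₂ =>
    obtain ⟨H₁, u₁, r₁⟩ := ih₁
    obtain ⟨H₂, u₂, r₂⟩ := ih₂
    obtain ⟨H, u, r⟩ := exists_uce_obat c u₁ u₂
    exact ⟨H, u, (Reduces.obat r₁ r₂).trans r⟩

end GradualLogic
end

section
/- Elementary complementation: for any unit chain s₀ ⋗ s₁ ⋗ ⋯ ⋗ s_k (k ∈ ℕ, all sᵢ ∈ 𝒮) and any valuation frame M: if [M ⊨ s₀ ⋗ s₁ ⋗ ⋯ ⋗ s_k] = 1 then [M ⊨ recursiveReduce(s₀ ⋗ s₁ ⋗ ⋯ ⋗ s_k)] = 0, and if [M ⊨ s₀ ⋗ s₁ ⋗ ⋯ ⋗ s_k] = 0 then [M ⊨ recursiveReduce(s₀ ⋗ s₁ ⋗ ⋯ ⋗ s_k)] = 1; these two events are mutually exclusive. -/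
/-!
Evaluated at any prefix `ψ`, the formula `recursiveReduce F` has value `1 - v`, where `v` is the
value of the unit chain `F`. The point is that distributing `x ⋗ -` over `∧` and `∨` does not
change the valuation (`Frame.valAux_distOb`), because `min` with a fixed number distributes over
`min` and `max`. Hence a chain with head of local value `i ∈ {0, 1}` and tail of value `v` reduces
to a formula of value `max (1 - i) (min i (1 - v)) = 1 - min i v`, and induction on the chain
gives the complementation (`Frame.valAux_recursiveReduce`).
-/

namespace GradualLogic

/-- Distributing `x ⋗ -` through a formula has the value of the undistributed `x ⋗ F`. This holds
for every formula, also outside unit chain expansion. -/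
theorem Frame.valAux_distOb {A : Type} {c : A → A} (M : Frame A c) (x : GS A) (F : GF A)
    (ψ : List (GS A)) :
    M.valAux ψ (distOb x F) = min (M.I ψ x) (M.valAux (ψ ++ [x]) F) := by
  induction F with
  | conj F G ihF ihG =>
    simp only [distOb, Frame.valAux, ihF, ihG]
    omega
  | disj F G ihF ihG =>
    simp only [distOb, Frame.valAux, ihF, ihG]
    omega
  | base y => simp only [distOb, Frame.valAux]
  | neg F => simp only [distOb, Frame.valAux]
  | obat F G => simp only [distOb, Frame.valAux]

/-- The inductive step of the complementation: prepending a head to a formula whose value is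
complemented by `recursiveReduce` preserves that property. -/
theorem Frame.valAux_recursiveReduce_cons {A : Type} {c : A → A} (M : Frame A c) (x : GS A)
    (F : GF A) (h : ∀ ψ, M.valAux ψ (recursiveReduce c F) = 1 - M.valAux ψ F)
    (ψ : List (GS A)) :
    M.valAux ψ (recursiveReduce c (GF.obat (GF.base x) F)) =
      1 - M.valAux ψ (GF.obat (GF.base x) F) := by
  simp only [recursiveReduce, Frame.valAux, M.valAux_distOb, M.Icompl, h]
  have := M.I01 ψ x
  omega

theorem Frame.valAux_recursiveReduce {A : Type} {c : A → A} (M : Frame A c) {F : GF A}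
    (hF : IsUnitChain F) :
    ∀ ψ, M.valAux ψ (recursiveReduce c F) = 1 - M.valAux ψ F := by
  induction hF with
  | base x y =>
    refine M.valAux_recursiveReduce_cons x _ fun ψ => ?_
    simp only [recursiveReduce, Frame.valAux, M.Icompl]
  | cons x _ ih => exact M.valAux_recursiveReduce_cons x _ ih

/-- Elementary complementation: for any unit chain
s₀ ⋗ s₁ ⋗ ⋯ ⋗ s_k (k ∈ ℕ, i.e. any element of 𝔘 ∪ 𝒮) and any valuation frame M:
if [M ⊨ F] = 1 then [M ⊨ recursiveReduce F] = 0, if [M ⊨ F] = 0 then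
[M ⊨ recursiveReduce F] = 1, and these two events are mutually exclusive. -/
theorem elementary_complementation (A : Type) [Countable A] [Infinite A]
    (c : A → A) (hc : Function.Involutive c)
    (F : GF A) (hF : (∃ x : GS A, F = GF.base x) ∨ IsUnitChain F)
    (M : Frame A c) :
    (M.val F = 1 → M.val (recursiveReduce c F) = 0) ∧
    (M.val F = 0 → M.val (recursiveReduce c F) = 1) ∧
    ¬(M.val F = 1 ∧ M.val F = 0) := by
  have key : M.val (recursiveReduce c F) = 1 - M.val F := by
    rcases hF with ⟨x, rfl⟩ | hF
    · simp only [Frame.val, recursiveReduce, Frame.valAux, M.Icompl]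
    · exact M.valAux_recursiveReduce hF []
  omega

end GradualLogic
end

section
/- Bisimulation theorem: let (F, F′) be a pair of formulas of gradual classical logic such that F′ is obtained from F by replacing one occurrence of a subformula of the first displayed shape by the corresponding formula of the second displayed shape (or vice versa), for any of the following shape pairs: ((F_a ∧ F_b) ⋗ F_c, (F_a ⋗ F_c) ∧ (F_b ⋗ F_c)); ((F_a ∨ F_b) ⋗ F_c, (F_a ⋗ F_c) ∨ (F_b ⋗ F_c)); (F_a ⋗ (F_b ∧ F_c), (F_a ⋗ F_b) ∧ (F_a ⋗ F_c)); (F_a ⋗ (F_b ∨ F_c), (F_a ⋗ F_b) ∨ (F_a ⋗ F_c)); ((F_a ⋗ F_b) ⋗ F_c, (F_a ⋗ F_c) ∧ ((F_a ⋗ F_b) ∨ (F_a ⋗ (F_b ⋗ F_c)))); (¬s, sᶜ); (¬(F₁ ∧ F₂), ¬F₁ ∨ ¬F₂); (¬(F₁ ∨ F₂), ¬F₁ ∧ ¬F₂); (¬(s ⋗ F₂), sᶜ ∨ (s ⋗ ¬F₂)); (F_a ∨ F_a, F_a); (F_a ∧ F_a, F_a); (F_a ∧ F_b, F_b ∧ F_a);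 (F_a ∨ F_b, F_b ∨ F_a); (F_a ∧ (F_b ∧ F_c), (F_a ∧ F_b) ∧ F_c); (F_a ∨ (F_b ∨ F_c), (F_a ∨ F_b) ∨ F_c). Then for every valuation frame M, every formula F₁ in unit chain expansion to which F reduces and every formula F₂ in unit chain expansion to which F′ reduces satisfy [M ⊨ F₁] = [M ⊨ F₂]. -/
/-!
The valuation extends from unit chain expansions to all formulas by a compositional truth value.
By synchronization the local interpretation depends only on the depth `n` (the length of the
prefix), so a formula has a Boolean truth value at each depth: `¬`, `∧`, `∨` are interpreted
classically at the same depth, and `F ⋗ G` holds at depth `n` iff `F` holds at depth `n` and `G`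
holds at depth `n + 1`. This is `Frame.truth`.

All fifteen shape pairs are Boolean identities for `truth` (`ShapePair.truth_eq`), and, `truth`
being compositional, replacing inside a context preserves it too (`ReplaceAt.truth_eq`). Every reduction
step is an instance of such a replacement, so reductions preserve `truth`. On unit chain
expansions `truth` at depth `0` is the given valuation (`UCE.valAux_eq`).
-/

namespace GradualLogic

/-- The truth value of an arbitrary formula at depth `n`. By synchronization the prefix matters
only through its length, so `⊤.⋯.⊤` serves as the representative prefix of length `n`. -/
def Frame.truth {A : Type} {c : A → A} (M : Frame A c) : ℕ → GF A → Bool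
  | n, GF.base x => decide (M.I (List.replicate n GS.top) x = 1)
  | n, GF.conj F G => M.truth n F && M.truth n G
  | n, GF.disj F G => M.truth n F || M.truth n G
  | n, GF.neg F => !M.truth n F
  | n, GF.obat F G => M.truth n F && M.truth (n + 1) G

lemma Frame.truth_compl {A : Type} {c : A → A} (M : Frame A c) (n : ℕ) (x : GS A) :
    M.truth n (GF.base (GS.compl c x)) = !M.truth n (GF.base x) := by
  simp only [Frame.truth, M.Icompl]
  rcases M.I01 (List.replicate n GS.top) x with h | h <;> simp [h]

lemma ShapePair.truth_eq {A : Type} {c : A → A} (M : Frame A c) {F F' : GF A}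
    (h : ShapePair c F F') (n : ℕ) : M.truth n F = M.truth n F' := by
  cases h with
  | s6 x => rw [M.truth_compl, Frame.truth.eq_4]
  | s9 x G =>
    rw [Frame.truth.eq_4, Frame.truth.eq_5, Frame.truth.eq_3, M.truth_compl, Frame.truth.eq_5,
      Frame.truth.eq_4]
    cases M.truth n (GF.base x) <;> simp
  | _ => simp only [Frame.truth]; grind

lemma ReplaceAt.truth_eq {A : Type} {c : A → A} (M : Frame A c) {F F' : GF A}
    (h : ReplaceAt (ShapePair c) F F') : ∀ n, M.truth n F = M.truth n F' := by
  induction h with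
  | here h => exact h.truth_eq M
  | here_rev h => exact fun n => (h.truth_eq M n).symm
  | _ => intro n; simp_all only [Frame.truth]

/-- Each reduction rule is one of the first nine shape pairs. -/
lemma Step.replaceAt {A : Type} {c : A → A} {F F' : GF A} (h : Step c F F') :
    ReplaceAt (ShapePair c) F F' := by
  induction h with
  | neg1 => exact .here (.s6 _)
  | neg2 => exact .here (.s7 _ _)
  | neg3 => exact .here (.s8 _ _)
  | neg4 => exact .here (.s9 _ _)
  | ob1 => exact .here (.s5 _ _ _)
  | ob2 => exact .here (.s1 _ _ _)
  | ob3 => exact .here (.s2 _ _ _)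
  | ob4 => exact .here (.s3 _ _ _)
  | ob5 => exact .here (.s4 _ _ _)
  | conj_left G _ ih => exact .conj_left G ih
  | conj_right F _ ih => exact .conj_right F ih
  | disj_left G _ ih => exact .disj_left G ih
  | disj_right F _ ih => exact .disj_right F ih
  | neg_congr _ ih => exact .neg_congr ih
  | obat_left G _ ih => exact .obat_left G ih
  | obat_right F _ ih => exact .obat_right F ih

lemma Reduces.truth_eq {A : Type} {c : A → A} (M : Frame A c) {F G : GF A}
    (h : Reduces c F G) (n : ℕ) : M.truth n F = M.truth n G := by
  induction h with
  | refl => rfl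
  | tail _ h ih => exact ih.trans (h.replaceAt.truth_eq M n)

lemma Frame.I_eq_truth {A : Type} {c : A → A} (M : Frame A c) (ψ : List (GS A)) (x : GS A) :
    M.I ψ x = (M.truth ψ.length (GF.base x)).toNat := by
  rw [Frame.truth, M.Isync ψ (List.replicate ψ.length GS.top) x (by simp)]
  rcases M.I01 (List.replicate ψ.length GS.top) x with h | h <;> simp [h]

lemma _root_.Bool.toNat_and_eq_min (a b : Bool) : (a && b).toNat = min a.toNat b.toNat := by
  cases a <;> cases b <;> rfl

lemma _root_.Bool.toNat_or_eq_max (a b : Bool) : (a || b).toNat = max a.toNat b.toNat := by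
  cases a <;> cases b <;> rfl

lemma IsUnitChain.valAux_eq {A : Type} {c : A → A} (M : Frame A c) {F : GF A}
    (h : IsUnitChain F) : ∀ ψ, M.valAux ψ F = (M.truth ψ.length F).toNat := by
  induction h with
  | base x y =>
    intro ψ
    rw [Frame.valAux, Frame.valAux, M.I_eq_truth, M.I_eq_truth, Frame.truth.eq_5,
      Bool.toNat_and_eq_min, List.length_append, List.length_singleton]
  | cons x _ ih =>
    intro ψ
    rw [Frame.valAux, ih, M.I_eq_truth, Frame.truth.eq_5,
      Bool.toNat_and_eq_min, List.length_append, List.length_singleton]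

/-- On unit chain expansions, `truth` agrees with the valuation. -/
lemma UCE.valAux_eq {A : Type} {c : A → A} (M : Frame A c) {F : GF A}
    (h : UCE F) (ψ : List (GS A)) : M.valAux ψ F = (M.truth ψ.length F).toNat := by
  induction h with
  | base x => rw [Frame.valAux, M.I_eq_truth]
  | chain h => exact h.valAux_eq M ψ
  | conj _ _ ihF ihG => rw [Frame.valAux, ihF, ihG, Frame.truth, Bool.toNat_and_eq_min]
  | disj _ _ ihF ihG => rw [Frame.valAux, ihF, ihG, Frame.truth, Bool.toNat_or_eq_max]

/-- Bisimulation theorem: if F' is obtained from F by replacing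
one occurrence of a subformula of one of the listed shapes by its partner shape
(in either direction), then every formula in unit chain expansion that F reduces
to and every formula in unit chain expansion that F' reduces to receive the same
value in every valuation frame. -/
theorem bisimulation (A : Type) [Countable A] [Infinite A]
    (c : A → A) (hc : Function.Involutive c)
    (F F' : GF A) (hFF' : ReplaceAt (ShapePair c) F F')
    (M : Frame A c) (F₁ F₂ : GF A)
    (h₁ : UCE F₁) (hr₁ : Reduces c F F₁)
    (h₂ : UCE F₂) (hr₂ : Reduces c F' F₂) :
    M.val F₁ = M.val F₂ := by
  rw [Frame.val, Frame.val, h₁.valAux_eq, h₂.valAux_eq, ← hr₁.truth_eq, ← hr₂.truth_eq,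
    hFF'.truth_eq M]

end GradualLogic
end
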